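/- Let G be a distance-regular graph of diameter 3 with intersection array {k, b₁, b₂; 1, c₂, c₃}, with distinct adjacency eigenvalues k > θ₁ > θ₂ > θ₃, and let q be a real number with q ∉ {q₁, q₂, q₃} and either q > 0 or q ≤ −1. Then the q-distance matrix 𝔻_q has exactly four distinct eigenvalues. -/

import Mathlib

open Matrix

variable {V : Type*} [Fintype V] [DecidableEq V]

/-- The distance-`i` matrix of a graph: the `(x,y)` entry is 1 if `dist x y = i`, else 0. -/
noncomputable def distM (G : SimpleGraph V) (i : ℕ) : Matrix V V ℝ :=
  Matrix.of fun x y => if G.dist x y = i then (1 : ℝ) else 0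

/-- The `q`-distance matrix `𝔻_q = ∑_{i=1}^D (1 + 1/q + ⋯ + 1/q^{i-1}) • A_i`. -/
noncomputable def qDist (G : SimpleGraph V) (D : ℕ) (q : ℝ) : Matrix V V ℝ :=
  ∑ i ∈ Finset.Icc 1 D, (∑ j ∈ Finset.range i, (1 / q) ^ j) • distM G i

/-- `G` is distance-regular with diameter `D` and intersection numbers `b i`, `c i`
(with `c 1 = 1`): for any vertices `x, y` at distance `i ≤ D`, the number of neighbors
of `y` at distance `i - 1` from `x` is `c i` and the number of neighbors of `y` at
distance `i + 1` from `x` is `b i`. -/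
def IsDRG (G : SimpleGraph V) (D : ℕ) (b c : ℕ → ℕ) : Prop :=
  G.Connected ∧
  (∀ x y : V, G.dist x y ≤ D) ∧
  (∃ x y : V, G.dist x y = D) ∧
  c 1 = 1 ∧
  ∀ i ≤ D, ∀ x y : V, G.dist x y = i →
    ({z : V | G.Adj y z ∧ G.dist x z = i - 1} : Set V).ncard = c i ∧
    ({z : V | G.Adj y z ∧ G.dist x z = i + 1} : Set V).ncard = b i

/-- `a i = k - b i - c i` as a real number, where `k = b 0`. -/
noncomputable def aInt (b c : ℕ → ℕ) (i : ℕ) : ℝ := (b 0 : ℝ) - (b i : ℝ) - (c i : ℝ)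

/-!
With `v₀, …, v_D` the distance polynomials of the graph, `A_i = v_i(A)`, so `𝔻_q = p(A)` for
`p = ∑ w_i v_i`, where `w_i = 1 + ⋯ + q^{-(i-1)}`, and the spectrum of `𝔻_q` is the image under `p`
of that of `A`. It remains to see that `p` separates the four eigenvalues.

The matrix `A_i` is nonnegative with row sums `v_i(k)`, so `v_i(θ) ≤ v_i(k)` for every eigenvalue
`θ`. The conditions on `q` make the weights `w_i` nonnegative, and `w₁ = 1`, so `p(θ) < p(k)` for
`θ ≠ k`. For `θ ≠ k` the Hoffman polynomial `∑ v_i` vanishes at `θ`; in diameter 3 this makes `p(θ)`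
quadratic in `θ`, whence `p(θ_l) = p(θ_m)` forces a value of `q` depending on `θ_l + θ_m` only.
The three eigenvalues other than `k` are the roots of a cubic with known coefficients, so
`θ_l + θ_m` is determined by the third eigenvalue, and that value of `q` is the excluded `q_j`.
-/

open Polynomial

theorem add_add_eq_neg_of_cubic_eq_zero {R : Type*} [CommRing R] [IsDomain R] {α β γ x y z : R}
    (hxy : x ≠ y) (hxz : x ≠ z) (hyz : y ≠ z) (hx : x ^ 3 + α * x ^ 2 + β * x + γ = 0)
    (hy : y ^ 3 + α * y ^ 2 + β * y + γ = 0) (hz : z ^ 3 + α * z ^ 2 + β * z + γ = 0) :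
    x + y + z = -α := by
  have hne : (x - y) * (x - z) * (y - z) ≠ 0 :=
    mul_ne_zero (mul_ne_zero (sub_ne_zero.2 hxy) (sub_ne_zero.2 hxz)) (sub_ne_zero.2 hyz)
  refine mul_left_cancel₀ hne ?_
  linear_combination (y - z) * hx - (x - z) * hy + (x - y) * hz

theorem geom_sum_nonneg_of_neg_one_le {R : Type*} [Ring R] [LinearOrder R] [IsStrictOrderedRing R]
    {r : R} (hr : -1 ≤ r) (n : ℕ) : 0 ≤ ∑ j ∈ Finset.range n, r ^ j := by
  obtain rfl | hr := hr.eq_or_lt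
  · rw [neg_one_geom_sum]
    split_ifs <;> simp
  · obtain rfl | hn := eq_or_ne n 0
    · simp
    · exact (geom_sum_pos' (neg_lt_iff_pos_add.1 hr) hn).le

theorem neg_one_le_one_div {K : Type*} [Field K] [LinearOrder K] [IsStrictOrderedRing K] {a : K}
    (ha : 0 < a ∨ a ≤ -1) : -1 ≤ 1 / a := by
  rcases ha with h | h
  · linarith [one_div_pos.2 h]
  · rw [le_div_iff_of_neg] <;> linarith

theorem eval_eq_zero_of_aeval_eq_zero {K R : Type*} [Field K] [Ring R] [Algebra K R] {a : R}
    {p : K[X]} (hp : aeval a p = 0) {μ : K} (hμ : μ ∈ spectrum K a) : p.eval μ = 0 := by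
  have : Nontrivial R := by
    by_contra h
    rw [not_nontrivial_iff_subsingleton] at h
    simp at hμ
  have hmem := spectrum.subset_polynomial_aeval a p ⟨μ, hμ, rfl⟩
  rwa [hp, spectrum.zero_eq, Set.mem_singleton_iff] at hmem

section MatrixSpectrum

variable {n : Type*} [Fintype n] [DecidableEq n]

theorem aeval_mulVec_of_mulVec_eq_smul {R : Type*} [CommSemiring R] {M : Matrix n n R} {v : n → R}
    {μ : R} (h : M *ᵥ v = μ • v) (p : R[X]) : aeval M p *ᵥ v = p.eval μ • v := by
  induction p using Polynomial.induction_on' with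
  | add p q hp hq => rw [map_add, add_mulVec, hp, hq, eval_add, add_smul]
  | monomial m a =>
    have hpow : M ^ m *ᵥ v = μ ^ m • v := by
      induction m with
      | zero => simp
      | succ m ih => rw [pow_succ, ← mulVec_mulVec, h, mulVec_smul, ih, smul_smul, pow_succ']
    rw [aeval_monomial, ← Algebra.smul_def, smul_mulVec, hpow, smul_smul, eval_monomial]

theorem spectrum_aeval_of_isHermitian {𝕜 : Type*} [RCLike 𝕜] {M : Matrix n n 𝕜}
    (hM : M.IsHermitian) (p : ℝ[X]) : spectrum ℝ (aeval M p) = p.eval '' spectrum ℝ M := by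
  have hM' : IsSelfAdjoint M := hM
  rw [← cfc_polynomial p M, cfc_map_spectrum p.eval M]

theorem le_of_mem_spectrum_of_sum_row_le {M : Matrix n n ℝ} {S μ : ℝ} (hM : ∀ i j, 0 ≤ M i j)
    (hS : ∀ i, ∑ j, M i j ≤ S) (hμ : μ ∈ spectrum ℝ M) : μ ≤ S := by
  rw [← spectrum_toLin', ← Module.End.hasEigenvalue_iff_mem_spectrum] at hμ
  obtain ⟨i, hi⟩ := eigenvalue_mem_ball hμ
  rw [Metric.mem_closedBall, Real.dist_eq] at hi
  calc
    μ ≤ M i i + ∑ j ∈ Finset.univ.erase i, ‖M i j‖ := by linarith [le_abs_self (μ - M i i)]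
    _ = ∑ j, M i j := by
      simp only [Real.norm_of_nonneg (hM _ _), Finset.add_sum_erase _ _ (Finset.mem_univ i)]
    _ ≤ S := hS i

end MatrixSpectrum

section Counting

omit [Fintype V] [DecidableEq V]

variable {G : SimpleGraph V} {D i j : ℕ} {b c : ℕ → ℕ} {x y : V}

/-- The number of neighbors of `y` at distance `j` from `x`; the intersection numbers of a
distance-regular graph are its values at `j = d(x, y) ± 1`. -/
noncomputable def neighborCount (G : SimpleGraph V) (x y : V) (j : ℕ) : ℕ :=
  {z : V | G.Adj y z ∧ G.dist x z = j}.ncard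

theorem neighborCount_self_one (G : SimpleGraph V) (y : V) :
    neighborCount G y y 1 = {z : V | G.Adj y z}.ncard := by
  simp only [neighborCount, SimpleGraph.dist_eq_one_iff_adj, and_self]

theorem exists_adj_dist_eq_of_dist_eq_succ (h : G.dist x y = i + 1) :
    ∃ z, G.Adj y z ∧ G.dist x z = i := by
  rw [SimpleGraph.dist_comm] at h
  obtain ⟨p, hp⟩ := SimpleGraph.exists_walk_of_dist_ne_zero (h.trans_ne i.succ_ne_zero)
  rw [h] at hp
  cases p with
  | nil => simp at hp
  | @cons _ z _ hyz p =>
    have hle : G.dist x z ≤ i := by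
      rw [SimpleGraph.dist_comm]
      have := SimpleGraph.dist_le p
      rw [SimpleGraph.Walk.length_cons] at hp
      omega
    have := hyz.diff_dist_adj (u := x)
    rw [SimpleGraph.dist_comm] at h
    exact ⟨z, hyz, by omega⟩

theorem neighborCount_eq_zero (h : G.dist x y + 1 < j ∨ j + 1 < G.dist x y) :
    neighborCount G x y j = 0 := by
  have hempty : {z : V | G.Adj y z ∧ G.dist x z = j} = ∅ := by
    refine Set.eq_empty_of_forall_notMem fun z ⟨hyz, hz⟩ => ?_
    have := hyz.diff_dist_adj (u := x)
    omega
  rw [neighborCount, hempty, Set.ncard_empty]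

theorem ncard_adj_eq_sum_neighborCount [Finite V] (h : G.dist x y = i + 1) :
    {z : V | G.Adj y z}.ncard =
      neighborCount G x y i + neighborCount G x y (i + 1) + neighborCount G x y (i + 2) := by
  have hunion : {z : V | G.Adj y z} =
      ({z | G.Adj y z ∧ G.dist x z = i} ∪ {z | G.Adj y z ∧ G.dist x z = i + 1}) ∪
        {z | G.Adj y z ∧ G.dist x z = i + 2} := by
    ext z
    simp only [Set.mem_union, Set.mem_ofPred_eq, ← and_or_left, iff_self_and]
    intro hyz
    have := hyz.diff_dist_adj (u := x)
    omega
  rw [hunion, Set.ncard_union_eq, Set.ncard_union_eq]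
  · rfl
  · refine Set.disjoint_left.2 fun z ⟨_, hz⟩ ⟨_, hz'⟩ => ?_
    omega
  · rw [Set.disjoint_left]
    rintro z (⟨_, hz⟩ | ⟨_, hz⟩) ⟨_, hz'⟩ <;> omega

namespace IsDRG

theorem connected (hG : IsDRG G D b c) : G.Connected := hG.1

theorem dist_le (hG : IsDRG G D b c) (x y : V) : G.dist x y ≤ D := hG.2.1 x y

theorem neighborCount_pred (hG : IsDRG G D b c) (h : G.dist x y = i + 1) :
    neighborCount G x y i = c (i + 1) :=
  (hG.2.2.2.2 (i + 1) (h ▸ hG.dist_le x y) x y h).1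

theorem neighborCount_succ (hG : IsDRG G D b c) (h : G.dist x y = i) :
    neighborCount G x y (i + 1) = b i :=
  (hG.2.2.2.2 i (h ▸ hG.dist_le x y) x y h).2

theorem ncard_adj (hG : IsDRG G D b c) (y : V) : {z : V | G.Adj y z}.ncard = b 0 := by
  rw [← neighborCount_self_one, ← hG.neighborCount_succ (SimpleGraph.dist_self (v := y))]

theorem neighborCount_dist [Finite V] (hG : IsDRG G D b c) (h : G.dist x y = i + 1) :
    (neighborCount G x y (i + 1) : ℝ) = aInt b c (i + 1) := by
  have hsum := ncard_adj_eq_sum_neighborCount h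
  rw [hG.ncard_adj, hG.neighborCount_pred h, hG.neighborCount_succ h] at hsum
  rw [aInt, hsum]
  push_cast
  ring

theorem exists_dist_eq (hG : IsDRG G D b c) (hi : i ≤ D) : ∃ x y, G.dist x y = i := by
  induction hi using Nat.decreasingInduction with
  | self => exact hG.2.2.1
  | of_succ i _ ih =>
    obtain ⟨x, y, hxy⟩ := ih
    obtain ⟨z, -, hz⟩ := exists_adj_dist_eq_of_dist_eq_succ hxy
    exact ⟨x, z, hz⟩

theorem c_succ_ne_zero [Finite V] (hG : IsDRG G D b c) (hi : i + 1 ≤ D) : c (i + 1) ≠ 0 := by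
  obtain ⟨x, y, hxy⟩ := hG.exists_dist_eq hi
  obtain ⟨z, hz⟩ := exists_adj_dist_eq_of_dist_eq_succ hxy
  rw [← hG.neighborCount_pred hxy]
  exact Set.ncard_ne_zero_of_mem hz

end IsDRG

end Counting

section DistanceMatrix

omit [DecidableEq V]

variable {G : SimpleGraph V} {D : ℕ} {b c : ℕ → ℕ}

omit [Fintype V] in
theorem isHermitian_distM (G : SimpleGraph V) (i : ℕ) : (distM G i).IsHermitian := by
  ext x y
  simp [distM, SimpleGraph.dist_comm]

omit [Fintype V] in
theorem distM_nonneg (G : SimpleGraph V) (i : ℕ) (x y : V) : 0 ≤ distM G i x y := by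
  rw [distM, of_apply]
  split_ifs <;> norm_num

theorem distM_mul_distM_one_apply (G : SimpleGraph V) (j : ℕ) (x y : V) :
    (distM G j * distM G 1) x y = neighborCount G x y j := by
  classical
  simp only [mul_apply, distM, of_apply, SimpleGraph.dist_eq_one_iff_adj, G.adj_comm _ y, ← ite_and,
    mul_ite, mul_one, mul_zero, Finset.sum_boole, neighborCount, Set.ncard_eq_toFinset_card',
    Set.toFinset_ofPred]

theorem sum_distM_one (G : SimpleGraph V) (x : V) :
    ∑ y, distM G 1 x y = {y : V | G.Adj x y}.ncard := by
  classical
  simp only [distM, of_apply, SimpleGraph.dist_eq_one_iff_adj, Finset.sum_boole,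
    Set.ncard_eq_toFinset_card', Set.toFinset_ofPred]

omit [Fintype V] in
theorem distM_zero [DecidableEq V] (hG : G.Connected) : distM G 0 = 1 := by
  ext x y
  simp only [distM, of_apply, hG.dist_eq_zero_iff, one_apply]

namespace IsDRG

theorem distM_succ_mul_distM_one (hG : IsDRG G D b c) (i : ℕ) :
    distM G (i + 1) * distM G 1 = (b i : ℝ) • distM G i + aInt b c (i + 1) • distM G (i + 1) +
      (c (i + 2) : ℝ) • distM G (i + 2) := by
  ext x y
  rw [distM_mul_distM_one_apply]
  simp only [Matrix.add_apply, Matrix.smul_apply, distM, of_apply, smul_eq_mul]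
  obtain h | h | h | h : G.dist x y = i ∨ G.dist x y = i + 1 ∨ G.dist x y = i + 2 ∨
      (G.dist x y + 1 < i + 1 ∨ i + 1 + 1 < G.dist x y) := by omega
  · simp [h, hG.neighborCount_succ h]
  · simp [h, hG.neighborCount_dist h]
  · simp [h, hG.neighborCount_pred h]
  · rw [neighborCount_eq_zero h, if_neg (by omega), if_neg (by omega), if_neg (by omega)]
    simp

omit [Fintype V] in
theorem sum_range_distM (hG : IsDRG G D b c) :
    ∑ i ∈ Finset.range (D + 1), distM G i = vecMulVec 1 1 := by
  ext x y
  simp [Matrix.sum_apply, distM, vecMulVec_apply, Nat.lt_succ_of_le (hG.dist_le x y)]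

omit [Fintype V] in
theorem distM_eq_zero (hG : IsDRG G D b c) {i : ℕ} (hi : D < i) : distM G i = 0 := by
  ext x y
  rw [distM, of_apply, if_neg ((hG.dist_le x y).trans_lt hi).ne, Matrix.zero_apply]

theorem distM_one_mulVec_one (hG : IsDRG G D b c) : distM G 1 *ᵥ 1 = (b 0 : ℝ) • 1 := by
  ext x
  simp [mulVec, dotProduct, sum_distM_one, hG.ncard_adj]

end IsDRG

end DistanceMatrix

section DistancePolynomial

variable {G : SimpleGraph V} {D : ℕ} {b c : ℕ → ℕ} {θ q : ℝ}

/-- The distance polynomials `v_i` of an intersection array, solving the three-term recurrence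
`X v_{i+1} = b_i v_i + a_{i+1} v_{i+1} + c_{i+2} v_{i+2}`, so that `A_i = v_i(A)`. The values at
indices beyond the diameter carry no meaning. -/
noncomputable def distPoly (b c : ℕ → ℕ) : ℕ → ℝ[X]
  | 0 => 1
  | 1 => X
  | i + 2 => (c (i + 2) : ℝ)⁻¹ •
      (distPoly b c (i + 1) * (X - C (aInt b c (i + 1))) - (b i : ℝ) • distPoly b c i)

@[simp]
theorem distPoly_zero (b c : ℕ → ℕ) : distPoly b c 0 = 1 := rfl

@[simp]
theorem distPoly_one (b c : ℕ → ℕ) : distPoly b c 1 = X := rfl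

/-- The polynomial `p` with `𝔻_q = p(A)`. -/
noncomputable def qDistPoly (b c : ℕ → ℕ) (D : ℕ) (q : ℝ) : ℝ[X] :=
  ∑ i ∈ Finset.Icc 1 D, (∑ j ∈ Finset.range i, (1 / q) ^ j) • distPoly b c i

namespace IsDRG

theorem aeval_distPoly (hG : IsDRG G D b c) :
    ∀ {i : ℕ}, i ≤ D → aeval (distM G 1) (distPoly b c i) = distM G i
  | 0, _ => by rw [distPoly_zero, map_one, distM_zero hG.connected]
  | 1, _ => by rw [distPoly_one, aeval_X]
  | i + 2, hi => by
    have hc : (c (i + 2) : ℝ) ≠ 0 := Nat.cast_ne_zero.2 (hG.c_succ_ne_zero hi)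
    rw [distPoly, map_smul, map_sub, map_mul, map_smul, hG.aeval_distPoly (by omega),
      hG.aeval_distPoly (by omega), map_sub, aeval_X, aeval_C, mul_sub, ← Algebra.commutes,
      ← Algebra.smul_def, hG.distM_succ_mul_distM_one, inv_smul_eq_iff₀ hc]
    abel

theorem aeval_qDistPoly (hG : IsDRG G D b c) (q : ℝ) :
    aeval (distM G 1) (qDistPoly b c D q) = qDist G D q := by
  rw [qDistPoly, qDist, map_sum]
  refine Finset.sum_congr rfl fun i hi => ?_
  rw [map_smul, hG.aeval_distPoly (Finset.mem_Icc.1 hi).2]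

theorem spectrum_qDist (hG : IsDRG G D b c) (q : ℝ) :
    spectrum ℝ (qDist G D q) = (qDistPoly b c D q).eval '' spectrum ℝ (distM G 1) := by
  rw [← hG.aeval_qDistPoly, spectrum_aeval_of_isHermitian (isHermitian_distM G 1)]

omit [DecidableEq V] in
theorem sum_distM (hG : IsDRG G D b c) {i : ℕ} (hi : i ≤ D) (x : V) :
    ∑ y, distM G i x y = (distPoly b c i).eval (b 0 : ℝ) := by
  classical
  have h := congrFun (aeval_mulVec_of_mulVec_eq_smul hG.distM_one_mulVec_one (distPoly b c i)) x
  simpa [hG.aeval_distPoly hi, mulVec, dotProduct] using h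

theorem eval_distPoly_le (hG : IsDRG G D b c) {i : ℕ} (hi : i ≤ D)
    (hθ : θ ∈ spectrum ℝ (distM G 1)) :
    (distPoly b c i).eval θ ≤ (distPoly b c i).eval (b 0 : ℝ) := by
  have hmem := spectrum.subset_polynomial_aeval (distM G 1) (distPoly b c i) ⟨θ, hθ, rfl⟩
  rw [hG.aeval_distPoly hi] at hmem
  exact le_of_mem_spectrum_of_sum_row_le (distM_nonneg G i) (fun x => (hG.sum_distM hi x).le) hmem

theorem eval_qDistPoly_lt (hG : IsDRG G D b c) (hD : 1 ≤ D) (hq : -1 ≤ 1 / q)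
    (hθ : θ ∈ spectrum ℝ (distM G 1)) (hθk : θ < b 0) :
    (qDistPoly b c D q).eval θ < (qDistPoly b c D q).eval (b 0 : ℝ) := by
  simp only [qDistPoly, eval_finsetSum, eval_smul, smul_eq_mul]
  refine Finset.sum_lt_sum (fun i hi => ?_) ⟨1, Finset.mem_Icc.2 ⟨le_rfl, hD⟩, ?_⟩
  · exact mul_le_mul_of_nonneg_left (hG.eval_distPoly_le (Finset.mem_Icc.1 hi).2 hθ)
      (geom_sum_nonneg_of_neg_one_le hq i)
  · simpa using hθk

theorem sum_eval_distPoly_eq_zero (hG : IsDRG G D b c) (hθ : θ ∈ spectrum ℝ (distM G 1))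
    (hθk : θ ≠ b 0) : ∑ i ∈ Finset.range (D + 1), (distPoly b c i).eval θ = 0 := by
  have hsum : aeval (distM G 1) (∑ i ∈ Finset.range (D + 1), distPoly b c i) = vecMulVec 1 1 := by
    rw [← hG.sum_range_distM, map_sum]
    exact Finset.sum_congr rfl fun i hi => hG.aeval_distPoly (Finset.mem_range_succ_iff.1 hi)
  have hmul : aeval (distM G 1)
      ((X - C (b 0 : ℝ)) * ∑ i ∈ Finset.range (D + 1), distPoly b c i) = 0 := by
    rw [map_mul, hsum, map_sub, aeval_X, aeval_C, sub_mul, mul_vecMulVec, hG.distM_one_mulVec_one,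
      ← Algebra.smul_def, smul_vecMulVec, sub_self]
  have heval := eval_eq_zero_of_aeval_eq_zero hmul hθ
  rw [eval_mul, eval_sub, eval_X, eval_C, eval_finsetSum] at heval
  exact (mul_eq_zero.1 heval).resolve_left (sub_ne_zero.2 hθk)

theorem eval_distPoly_diameter (hG : IsDRG G (D + 1) b c) (hθ : θ ∈ spectrum ℝ (distM G 1)) :
    (θ - aInt b c (D + 1)) * (distPoly b c (D + 1)).eval θ = b D * (distPoly b c D).eval θ := by
  have hzero : aeval (distM G 1) (distPoly b c (D + 1) * (X - C (aInt b c (D + 1))) -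
      (b D : ℝ) • distPoly b c D) = 0 := by
    rw [map_sub, map_mul, map_smul, hG.aeval_distPoly le_rfl, hG.aeval_distPoly (by omega), map_sub,
      aeval_X, aeval_C, mul_sub, ← Algebra.commutes, ← Algebra.smul_def,
      hG.distM_succ_mul_distM_one, hG.distM_eq_zero (i := D + 2) (by omega), smul_zero]
    abel
  have heval := eval_eq_zero_of_aeval_eq_zero hzero hθ
  simp only [eval_sub, eval_mul, eval_smul, eval_X, eval_C, smul_eq_mul] at heval
  linear_combination heval

end IsDRG

end DistancePolynomial

section DiameterThree

variable {G : SimpleGraph V} {b c : ℕ → ℕ} {θ η ζ q : ℝ}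

theorem eval_distPoly_two (b c : ℕ → ℕ) (θ : ℝ) :
    (distPoly b c 2).eval θ = (θ ^ 2 - aInt b c 1 * θ - b 0) / c 2 := by
  simp only [distPoly, eval_smul, eval_sub, eval_mul, eval_X, eval_C, eval_one, smul_eq_mul]
  ring

namespace IsDRG

theorem eval_distPoly_three (hG : IsDRG G 3 b c) (hθ : θ ∈ spectrum ℝ (distM G 1) \ {(b 0 : ℝ)}) :
    (distPoly b c 3).eval θ = -(1 + θ + (distPoly b c 2).eval θ) := by
  have h := hG.sum_eval_distPoly_eq_zero hθ.1 hθ.2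
  simp only [Finset.sum_range_succ, Finset.sum_range_zero, distPoly_zero, distPoly_one,
    eval_one, eval_X] at h
  linear_combination h

theorem eval_qDistPoly_three (hG : IsDRG G 3 b c) (hθ : θ ∈ spectrum ℝ (distM G 1) \ {(b 0 : ℝ)}) :
    (qDistPoly b c 3 q).eval θ =
      -(1 + 1 / q * (1 + θ) + (1 / q) ^ 2 * (1 + θ + (distPoly b c 2).eval θ)) := by
  rw [qDistPoly, show Finset.Icc 1 3 = {1, 2, 3} from rfl]
  simp only [Finset.sum_insert, Finset.sum_singleton, Finset.mem_insert, Finset.mem_singleton,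
    OfNat.one_ne_ofNat, Nat.reduceEqDiff, or_self, not_false_eq_true, Finset.sum_range_succ,
    Finset.sum_range_zero, eval_add, eval_smul, smul_eq_mul, distPoly_one, eval_X,
    hG.eval_distPoly_three hθ]
  ring

theorem cubic_eq_zero (hG : IsDRG G 3 b c) (hθ : θ ∈ spectrum ℝ (distM G 1) \ {(b 0 : ℝ)}) :
    θ ^ 3 + (b 2 + c 2 - aInt b c 1 - aInt b c 3) * θ ^ 2 +
      (c 2 * (1 - aInt b c 3) - b 0 - aInt b c 1 * (b 2 - aInt b c 3)) * θ +
      (-(b 0 * (b 2 - aInt b c 3)) - c 2 * aInt b c 3) = 0 := by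
  have h := hG.eval_distPoly_diameter hθ.1
  rw [hG.eval_distPoly_three hθ, eval_distPoly_two] at h
  have hc : (c 2 : ℝ) ≠ 0 := Nat.cast_ne_zero.2 (hG.c_succ_ne_zero (by norm_num))
  field_simp at h
  linear_combination -h

theorem add_add_eigenvalues (hG : IsDRG G 3 b c)
    (hθ : θ ∈ spectrum ℝ (distM G 1) \ {(b 0 : ℝ)})
    (hη : η ∈ spectrum ℝ (distM G 1) \ {(b 0 : ℝ)})
    (hζ : ζ ∈ spectrum ℝ (distM G 1) \ {(b 0 : ℝ)}) (hθη : θ ≠ η) (hθζ : θ ≠ ζ) (hηζ : η ≠ ζ) :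
    θ + η + ζ = aInt b c 1 + aInt b c 3 - b 2 - c 2 := by
  rw [add_add_eq_neg_of_cubic_eq_zero hθη hθζ hηζ (hG.cubic_eq_zero hθ)
    (hG.cubic_eq_zero hη) (hG.cubic_eq_zero hζ)]
  ring

theorem eval_qDistPoly_ne (hG : IsDRG G 3 b c) (hq₀ : q ≠ 0)
    (hθ : θ ∈ spectrum ℝ (distM G 1) \ {(b 0 : ℝ)})
    (hη : η ∈ spectrum ℝ (distM G 1) \ {(b 0 : ℝ)})
    (hζ : ζ ∈ spectrum ℝ (distM G 1) \ {(b 0 : ℝ)}) (hθη : θ ≠ η) (hθζ : θ ≠ ζ) (hηζ : η ≠ ζ)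
    (hq : q ≠ (ζ - aInt b c 3 + b 2) / c 2) :
    (qDistPoly b c 3 q).eval θ ≠ (qDistPoly b c 3 q).eval η := by
  contrapose! hq with h
  have hsum := hG.add_add_eigenvalues hθ hη hζ hθη hθζ hηζ
  have hc : (c 2 : ℝ) ≠ 0 := Nat.cast_ne_zero.2 (hG.c_succ_ne_zero (by norm_num))
  rw [hG.eval_qDistPoly_three hθ, hG.eval_qDistPoly_three hη, eval_distPoly_two,
    eval_distPoly_two] at h
  field_simp at h ⊢
  refine mul_left_cancel₀ (sub_ne_zero.2 hθη) ?_
  linear_combination -h - (θ - η) * hsum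

end IsDRG

end DiameterThree

/-- Corollary 3.6(i): for a distance-regular graph of diameter 3 with
intersection array `{k, b₁, b₂; 1, c₂, c₃}`, distinct adjacency eigenvalues
`k > θ₁ > θ₂ > θ₃`, and a real `q` with `q ∉ {q₁, q₂, q₃}` (where
`q_l = (θ_l − a₃ + b₂)/c₂`) and `q > 0` or `q ≤ −1`, the matrix `𝔻_q` has exactly four
distinct eigenvalues. -/
theorem stmt8 (G : SimpleGraph V) (b c : ℕ → ℕ) (hG : IsDRG G 3 b c)
    (θ₁ θ₂ θ₃ : ℝ) (h1 : (b 0 : ℝ) > θ₁) (h2 : θ₁ > θ₂) (h3 : θ₂ > θ₃)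
    (hspec : spectrum ℝ (distM G 1) = ({(b 0 : ℝ), θ₁, θ₂, θ₃} : Set ℝ))
    (q : ℝ)
    (hq : q ∉ ({(θ₁ - aInt b c 3 + (b 2 : ℝ)) / (c 2 : ℝ),
                (θ₂ - aInt b c 3 + (b 2 : ℝ)) / (c 2 : ℝ),
                (θ₃ - aInt b c 3 + (b 2 : ℝ)) / (c 2 : ℝ)} : Set ℝ))
    (hq' : 0 < q ∨ q ≤ -1) :
    (spectrum ℝ (qDist G 3 q)).ncard = 4 := by
  have hq₀ : q ≠ 0 := by rcases hq' with h | h <;> linarith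
  have hr : -1 ≤ 1 / q := neg_one_le_one_div hq'
  simp only [Set.mem_insert_iff, Set.mem_singleton_iff, not_or] at hq
  obtain ⟨hq₁, hq₂, hq₃⟩ := hq
  have hθ₁ : θ₁ ∈ spectrum ℝ (distM G 1) \ {(b 0 : ℝ)} := ⟨by simp [hspec], h1.ne⟩
  have hθ₂ : θ₂ ∈ spectrum ℝ (distM G 1) \ {(b 0 : ℝ)} := ⟨by simp [hspec], (h2.trans h1).ne⟩
  have hθ₃ : θ₃ ∈ spectrum ℝ (distM G 1) \ {(b 0 : ℝ)} :=
    ⟨by simp [hspec], (h3.trans (h2.trans h1)).ne⟩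
  have hk₁ := (hG.eval_qDistPoly_lt (by norm_num) hr hθ₁.1 h1).ne'
  have hk₂ := (hG.eval_qDistPoly_lt (by norm_num) hr hθ₂.1 (h2.trans h1)).ne'
  have hk₃ := (hG.eval_qDistPoly_lt (by norm_num) hr hθ₃.1 (h3.trans (h2.trans h1))).ne'
  have h₁₂ := hG.eval_qDistPoly_ne hq₀ hθ₁ hθ₂ hθ₃ h2.ne' (h3.trans h2).ne' h3.ne' hq₃
  have h₁₃ := hG.eval_qDistPoly_ne hq₀ hθ₁ hθ₃ hθ₂ (h3.trans h2).ne' h2.ne' h3.ne hq₂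
  have h₂₃ := hG.eval_qDistPoly_ne hq₀ hθ₂ hθ₃ hθ₁ h3.ne' h2.ne (h3.trans h2).ne hq₁
  rw [hG.spectrum_qDist, hspec, Set.image_insert_eq, Set.image_insert_eq, Set.image_pair,
    Set.ncard_insert_of_notMem (by simp [hk₁, hk₂, hk₃]),
    Set.ncard_insert_of_notMem (by simp [h₁₂, h₁₃]), Set.ncard_pair h₂₃]
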